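/- Let G be a coloured graph on the vertex set ℕ with finitely many edges, each coloured red or blue, and suppose G is red-bipartite. Let e = uu' be a pair of distinct vertices that is not an edge of G. Then e can be coloured red or blue so that the resulting coloured graph G' (obtained from G by adding e with that colour) is red-bipartite and satisfies f(G') ≤ f(G) + φ + 1, where f is the potential function defined below and φ = (1+√5)/2. -/

import Mathlib

open SimpleGraph

/-- The golden ratio `φ = (1 + √5)/2`. -/
noncomputable def φ : ℝ := (1 + Real.sqrt 5) / 2

/-- The auxiliary function `g(x,y) = φ·max(x,y) - φ + max(max(x,y) - φ³, min(x,y))`;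
for a connected red-bipartite graph `H` with red-bipartition `(V₁,V₂)` and more than
one vertex, `f(H) = g(p_H(V₁), p_H(V₂))`. -/
noncomputable def g (x y : ℝ) : ℝ := φ * max x y - φ + max (max x y - φ ^ 3) (min x y)

/-- `σ` encodes a red-bipartition of the coloured graph `(G, c)` (`true` = red,
`false` = blue): vertices with `σ v = true` form `V₁` and those with `σ v = false`
form `V₂`, every red edge joins the two sides and every blue edge stays within a side. -/
def IsRedBipartition (G : SimpleGraph ℕ) (c : Sym2 ℕ → Bool) (σ : ℕ → Bool) : Prop :=
  ∀ u v, G.Adj u v → (c s(u, v) = true ↔ σ u ≠ σ v)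

/-- `p_G(W) = |W|·φ + |E[W]|`, where `E[W]` is the set of edges of `G` with both
endpoints in `W`. -/
noncomputable def pot (G : SimpleGraph ℕ) (W : Set ℕ) : ℝ :=
  (W.ncard : ℝ) * φ + ({e ∈ G.edgeSet | ∀ v ∈ e, v ∈ W}.ncard : ℝ)

/-- The value `f` on the connected component `K` of `G`, with red-bipartition
encoded by `σ`: `0` for an isolated vertex, and
`φ·a - φ + max(a - φ³, b) = g(p(V₁), p(V₂))` otherwise, where `(V₁, V₂)` is the
induced red-bipartition of the component. -/
noncomputable def fComp (G : SimpleGraph ℕ) (σ : ℕ → Bool) (K : G.ConnectedComponent) : ℝ :=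
  letI := Classical.dec K.supp.Subsingleton
  if K.supp.Subsingleton then 0
  else g (pot G {v ∈ K.supp | σ v = true}) (pot G {v ∈ K.supp | σ v = false})

/-- The potential `f(G)`: the sum of `f` over all connected components of `G`
(only finitely many components contribute a non-zero value). -/
noncomputable def potential (G : SimpleGraph ℕ) (σ : ℕ → Bool) : ℝ :=
  ∑ᶠ K : G.ConnectedComponent, fComp G σ K

lemma phi_sq : φ ^ 2 = φ + 1 := by
  have h := Real.sq_sqrt (show (0 : ℝ) ≤ 5 by norm_num)
  unfold φ
  linear_combination h / 4

lemma phi_gt : 3 / 2 < φ := by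
  have h : (2 : ℝ) < Real.sqrt 5 := Real.lt_sqrt_of_sq_lt (by norm_num)
  unfold φ
  linarith

lemma phi_cube : φ ^ 3 = 2 * φ + 1 := by
  linear_combination (φ + 1) * phi_sq

lemma g_comm (x y : ℝ) : g x y = g y x := by
  simp only [g, max_comm x y, min_comm x y]

lemma g_of_le {x y : ℝ} (h : y ≤ x) :
    g x y = φ * x - φ + max (x - (2 * φ + 1)) y := by
  rw [g, max_eq_left h, min_eq_right h, phi_cube]

lemma g_phi_phi : g φ φ = φ + 1 := by
  rw [g_of_le le_rfl, max_eq_right (by linarith [phi_gt])]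
  linear_combination phi_sq

lemma g_add_one_le (x y : ℝ) : g (x + 1) y ≤ g x y + φ + 1 := by
  have hφ := phi_gt
  rcases le_total y x with h | h
  · rw [g_of_le h, g_of_le (by linarith)]
    have : max (x + 1 - (2 * φ + 1)) y ≤ max (x - (2 * φ + 1)) y + 1 := by grind
    linarith
  · rw [g_comm x, g_of_le h]
    rcases le_total y (x + 1) with h' | h'
    · rw [g_of_le h']
      have : max (x + 1 - (2 * φ + 1)) y ≤ max (y - (2 * φ + 1)) x + 1 := by grind
      nlinarith
    · rw [g_comm, g_of_le h']
      have : max (y - (2 * φ + 1)) (x + 1) ≤ max (y - (2 * φ + 1)) x + 1 := by grind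
      linarith

/-- Attaching an isolated vertex to a nontrivial component. -/
lemma g_attach_vertex (x y : ℝ) :
    g x (y + φ) ≤ g x y + φ + 1 ∨ g (x + φ + 1) y ≤ g x y + φ + 1 := by
  have hφ := phi_gt
  have hsq := phi_sq
  rcases le_total y x with h | h
  · left
    rw [g_of_le h]
    have h1 := le_max_right (x - (2 * φ + 1)) y
    rcases le_total (y + φ) x with h' | h'
    · rw [g_of_le h']
      have : max (x - (2 * φ + 1)) (y + φ) ≤ max (x - (2 * φ + 1)) y + φ := by grind
      linarith
    · rw [g_comm, g_of_le h', max_eq_right (by linarith)]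
      nlinarith
  · rw [g_comm x y, g_of_le h]
    rcases le_total y (x + φ + 1) with h' | h'
    · left
      rw [g_comm, g_of_le (by linarith), max_eq_right (by linarith)]
      have h1 := le_max_right (y - (2 * φ + 1)) x
      nlinarith
    · right
      rw [g_comm, g_of_le h']
      have : max (y - (2 * φ + 1)) (x + φ + 1) ≤ max (y - (2 * φ + 1)) x + φ + 1 := by grind
      linarith

/-- Merging two nontrivial components with the larger sides opposite each other. -/
lemma g_cross_le {a₁ b₁ a₂ b₂ : ℝ} (h₁ : b₁ ≤ a₁) (h₂ : b₂ ≤ a₂) :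
    g (a₁ + b₂) (b₁ + a₂) ≤ g a₁ b₁ + g a₂ b₂ + φ + 1 := by
  wlog h : a₂ - b₂ ≤ a₁ - b₁ generalizing a₁ b₁ a₂ b₂
  · have := this h₂ h₁ (by linarith)
    rw [g_comm, add_comm b₁, add_comm a₁]
    linarith
  have hφ := phi_gt
  rw [g_of_le h₁, g_of_le h₂, g_of_le (by linarith)]
  have : max (a₁ + b₂ - (2 * φ + 1)) (b₁ + a₂) ≤
      max (a₁ - (2 * φ + 1)) b₁ + max (a₂ - (2 * φ + 1)) b₂ + (a₂ - b₂) := by grind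
  nlinarith

/-- Merging two nontrivial components with the larger sides opposite in one colour and together
in the other. -/
lemma g_cross_or_align {a₁ b₁ a₂ b₂ : ℝ} (h₁ : b₁ ≤ a₁) (h₂ : b₂ ≤ a₂) :
    g (a₁ + a₂) (b₁ + b₂) ≤ g a₁ b₁ + g a₂ b₂ + φ + 1 ∨
      g (a₁ + b₂ + 1) (b₁ + a₂) ≤ g a₁ b₁ + g a₂ b₂ + φ + 1 := by
  have hφ := phi_gt
  rw [g_of_le h₁, g_of_le h₂]
  by_cases hm : a₁ - b₁ ≤ 1 ∨ a₂ - b₂ ≤ 1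
  · left
    rw [g_of_le (by linarith)]
    have : max (a₁ + a₂ - (2 * φ + 1)) (b₁ + b₂) ≤
        max (a₁ - (2 * φ + 1)) b₁ + max (a₂ - (2 * φ + 1)) b₂ + 1 := by grind
    linarith
  · right
    push Not at hm
    obtain ⟨hm₁, hm₂⟩ := hm
    rcases le_total (b₁ + a₂) (a₁ + b₂ + 1) with h | h
    · rw [g_of_le h]
      have : max (a₁ + b₂ + 1 - (2 * φ + 1)) (b₁ + a₂) ≤
          max (a₁ - (2 * φ + 1)) b₁ + max (a₂ - (2 * φ + 1)) b₂ + (a₂ - b₂) := by grind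
      nlinarith
    · rw [g_comm, g_of_le h]
      have : max (b₁ + a₂ - (2 * φ + 1)) (a₁ + b₂ + 1) ≤
          max (a₁ - (2 * φ + 1)) b₁ + max (a₂ - (2 * φ + 1)) b₂ + (a₁ - b₁) + 1 := by grind
      nlinarith

/-- Merging two nontrivial components by a red or a blue edge. -/
lemma g_merge (x₁ y₁ x₂ y₂ : ℝ) :
    g (x₁ + y₂) (y₁ + x₂) ≤ g x₁ y₁ + g x₂ y₂ + φ + 1 ∨
      g (x₁ + x₂ + 1) (y₁ + y₂) ≤ g x₁ y₁ + g x₂ y₂ + φ + 1 := by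
  rcases le_total y₁ x₁ with h₁ | h₁ <;> rcases le_total y₂ x₂ with h₂ | h₂
  · exact .inl (g_cross_le h₁ h₂)
  · simpa only [g_comm x₂ y₂] using g_cross_or_align h₁ h₂
  · have := g_cross_or_align h₂ h₁
    rw [g_comm x₁ y₁, g_comm (x₁ + y₂), add_comm y₁ x₂, add_comm x₁ y₂, add_comm x₁ x₂,
      add_comm y₁ y₂, add_comm (g y₁ x₁)]
    exact this
  · left
    have := g_cross_le h₁ h₂
    rwa [g_comm x₁ y₁, g_comm x₂ y₂, g_comm]

/-- The part of `S` on side `t` of `σ`. -/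
def side (σ : ℕ → Bool) (S : Set ℕ) (t : Bool) : Set ℕ := {v ∈ S | σ v = t}

/-- The vertex set of the component of `v`. -/
def cls (G : SimpleGraph ℕ) (v : ℕ) : Set ℕ := {w | G.Reachable v w}

open Classical in
/-- The contribution of a component to the potential, as a function of its vertex set. -/
noncomputable def fSet (G : SimpleGraph ℕ) (σ : ℕ → Bool) (S : Set ℕ) : ℝ :=
  if S.Subsingleton then 0 else g (pot G (side σ S true)) (pot G (side σ S false))

section

variable {G : SimpleGraph ℕ} {σ : ℕ → Bool} {u u' v w : ℕ}

lemma fSet_of_not_subsingleton {S : Set ℕ} (h : ¬ S.Subsingleton) (t : Bool) :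
    fSet G σ S = g (pot G (side σ S t)) (pot G (side σ S !t)) := by
  cases t
  · rw [g_comm]
    exact if_neg h
  · exact if_neg h

lemma fSet_of_subsingleton {S : Set ℕ} (h : S.Subsingleton) : fSet G σ S = 0 := if_pos h

lemma mem_cls_self : v ∈ cls G v := Reachable.refl v

lemma cls_eq_of_mem (h : w ∈ cls G v) : cls G w = cls G v :=
  Set.ext fun _ => ⟨fun hx => Reachable.trans h hx, fun hx => (Reachable.symm h).trans hx⟩

lemma mem_cls_iff : w ∈ cls G v ↔ cls G w = cls G v :=
  ⟨cls_eq_of_mem, fun h => h ▸ mem_cls_self⟩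

lemma cls_eq_of_adj (h : G.Adj v w) : cls G v = cls G w :=
  (cls_eq_of_mem h.reachable).symm

lemma mem_cls_iff_of_adj (h : G.Adj v w) (x : ℕ) : v ∈ cls G x ↔ w ∈ cls G x := by
  rw [mem_cls_iff, mem_cls_iff, cls_eq_of_adj h]

lemma supp_mk (v : ℕ) : (G.connectedComponentMk v).supp = cls G v := by
  ext w
  rw [ConnectedComponent.mem_supp_iff, ConnectedComponent.eq]
  exact reachable_comm

lemma range_supp :
    Set.range (ConnectedComponent.supp : G.ConnectedComponent → Set ℕ) = Set.range (cls G) := by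
  ext S
  constructor
  · rintro ⟨K, rfl⟩
    induction K using ConnectedComponent.ind with
    | h v => exact ⟨v, (supp_mk v).symm⟩
  · rintro ⟨v, rfl⟩
    exact ⟨_, supp_mk v⟩

lemma potential_eq_finsum_cls (G : SimpleGraph ℕ) (σ : ℕ → Bool) :
    potential G σ = ∑ᶠ S ∈ Set.range (cls G), fSet G σ S := by
  rw [← range_supp, finsum_mem_range ConnectedComponent.supp_injective]
  refine finsum_congr fun K => ?_
  by_cases h : K.supp.Subsingleton <;> simp [fComp, fSet, side, h]

lemma finite_endpoints (hfin : G.edgeSet.Finite) : {v | ∃ w, G.Adj v w}.Finite := by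
  refine (hfin.biUnion (t := fun e => {v | v ∈ e}) fun e _ => ?_).subset ?_
  · induction e with
    | h a b =>
      refine (Set.toFinite {a, b}).subset fun v hv => ?_
      simpa using hv
  · rintro v ⟨w, h⟩
    exact Set.mem_biUnion (x := s(v, w)) h (Sym2.mem_mk_left v w)

lemma exists_adj_of_mem_cls (h : w ∈ cls G v) (hne : v ≠ w) : ∃ x, G.Adj v x := by
  obtain ⟨p⟩ := h
  cases p with
  | nil => exact absurd rfl hne
  | cons hadj _ => exact ⟨_, hadj⟩

lemma finite_cls (hfin : G.edgeSet.Finite) (v : ℕ) : (cls G v).Finite := by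
  refine ((finite_endpoints hfin).insert v).subset fun w hw => ?_
  by_cases hne : w = v
  · exact .inl hne
  · exact .inr (exists_adj_of_mem_cls (Reachable.symm hw) hne)

lemma finite_range_cls_inter_support (hfin : G.edgeSet.Finite) :
    (Set.range (cls G) ∩ Function.support (fSet G σ)).Finite := by
  refine ((finite_endpoints hfin).image (cls G)).subset ?_
  rintro _ ⟨⟨v, rfl⟩, hv⟩
  have h : ¬ (cls G v).Subsingleton := fun h => hv (fSet_of_subsingleton h)
  obtain ⟨w, hw, hne⟩ := (Set.not_subsingleton_iff.1 h).exists_ne v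
  exact ⟨v, exists_adj_of_mem_cls hw hne.symm, rfl⟩

lemma side_subset (S : Set ℕ) (t : Bool) : side σ S t ⊆ S := Set.sep_subset _ _

lemma pot_union (hfin : G.edgeSet.Finite) {W₁ W₂ : Set ℕ} (hW₁ : W₁ ⊆ cls G u)
    (hW₂ : W₂ ⊆ cls G u') (hd : u' ∉ cls G u) : pot G (W₁ ∪ W₂) = pot G W₁ + pot G W₂ := by
  have hdisj : ∀ x ∈ W₁, x ∉ W₂ := fun x hx₁ hx₂ =>
    hd ((hW₁ hx₁).trans (Reachable.symm (hW₂ hx₂)))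
  have hE : {e ∈ G.edgeSet | ∀ v ∈ e, v ∈ W₁ ∪ W₂} =
      {e ∈ G.edgeSet | ∀ v ∈ e, v ∈ W₁} ∪ {e ∈ G.edgeSet | ∀ v ∈ e, v ∈ W₂} := by
    ext e
    induction e with
    | h a b =>
      have h₁ : G.Adj a b → (a ∈ cls G u ↔ b ∈ cls G u) := fun h => mem_cls_iff_of_adj h u
      have hn : ∀ x ∈ W₂, x ∉ cls G u := fun x hx hx' =>
        hd (hx'.trans (Reachable.symm (hW₂ hx)))
      simp only [Set.mem_ofPred_eq, mem_edgeSet, Sym2.mem_iff, forall_eq_or_imp, forall_eq,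
        Set.mem_union]
      grind
  rw [pot, pot, pot, hE, Set.ncard_union_eq (Set.disjoint_left.2 hdisj)
    ((finite_cls hfin u).subset hW₁) ((finite_cls hfin u').subset hW₂), Set.ncard_union_eq _
    (hfin.subset (Set.sep_subset _ _)) (hfin.subset (Set.sep_subset _ _))]
  · push_cast
    ring
  · refine Set.disjoint_left.2 fun e => ?_
    induction e with
    | h a b =>
      rintro ⟨-, h₁⟩ ⟨-, h₂⟩
      exact hdisj a (h₁ a (Sym2.mem_mk_left a b)) (h₂ a (Sym2.mem_mk_left a b))

lemma edgeSet_sup_edge (hne : u ≠ u') :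
    (G ⊔ fromEdgeSet {s(u, u')}).edgeSet = insert s(u, u') G.edgeSet := by
  ext e
  induction e with
  | h a b =>
    simp only [mem_edgeSet, sup_adj, fromEdgeSet_adj, Set.mem_singleton_iff, Set.mem_insert_iff,
      Sym2.eq_iff]
    grind

lemma pot_sup_edge_of_mem (hfin : G.edgeSet.Finite) (hne : u ≠ u') (hnadj : ¬ G.Adj u u')
    {W : Set ℕ} (hu : u ∈ W) (hu' : u' ∈ W) :
    pot (G ⊔ fromEdgeSet {s(u, u')}) W = pot G W + 1 := by
  have hE : {e ∈ (G ⊔ fromEdgeSet {s(u, u')}).edgeSet | ∀ v ∈ e, v ∈ W} =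
      insert s(u, u') {e ∈ G.edgeSet | ∀ v ∈ e, v ∈ W} := by
    rw [edgeSet_sup_edge hne]
    ext e
    simp only [Set.mem_ofPred_eq, Set.mem_insert_iff]
    have : ∀ v ∈ s(u, u'), v ∈ W := by simp [hu, hu']
    grind
  rw [pot, pot, hE, Set.ncard_insert_of_notMem (fun h => hnadj h.1)
    (hfin.subset (Set.sep_subset _ _))]
  push_cast
  ring

lemma pot_sup_edge_of_not_mem (hne : u ≠ u') {W : Set ℕ} (h : ¬ (u ∈ W ∧ u' ∈ W)) :
    pot (G ⊔ fromEdgeSet {s(u, u')}) W = pot G W := by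
  have hE : {e ∈ (G ⊔ fromEdgeSet {s(u, u')}).edgeSet | ∀ v ∈ e, v ∈ W} =
      {e ∈ G.edgeSet | ∀ v ∈ e, v ∈ W} := by
    rw [edgeSet_sup_edge hne]
    ext e
    simp only [Set.mem_ofPred_eq, Set.mem_insert_iff]
    have : ¬ ∀ v ∈ s(u, u'), v ∈ W := by simpa using h
    grind
  rw [pot, pot, hE]

lemma reachable_of_sup_edge (h : (G ⊔ fromEdgeSet {s(u, u')}).Reachable v w) :
    G.Reachable v w ∨ (v ∈ cls G u ∪ cls G u' ∧ w ∈ cls G u ∪ cls G u') := by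
  obtain ⟨p⟩ := h
  induction p with
  | nil => exact .inl (Reachable.refl _)
  | @cons a b c hadj _ ih =>
    rw [sup_adj, fromEdgeSet_adj, Set.mem_singleton_iff, Sym2.eq_iff] at hadj
    have hu : u ∈ cls G u := mem_cls_self
    have hu' : u' ∈ cls G u' := mem_cls_self
    rcases hadj with hadj | ⟨⟨rfl, rfl⟩ | ⟨rfl, rfl⟩, -⟩
    · refine ih.imp hadj.reachable.trans fun h => ⟨?_, h.2⟩
      rw [Set.mem_union, mem_cls_iff_of_adj hadj, mem_cls_iff_of_adj hadj]
      exact h.1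
    · exact .inr ⟨.inl hu, ih.elim .inr And.right⟩
    · exact .inr ⟨.inr hu', ih.elim .inl And.right⟩

lemma cls_sup_edge_of_mem (hne : u ≠ u') (hv : v ∈ cls G u ∪ cls G u') :
    cls (G ⊔ fromEdgeSet {s(u, u')}) v = cls G u ∪ cls G u' := by
  have hle : ∀ {a b}, G.Reachable a b → (G ⊔ fromEdgeSet {s(u, u')}).Reachable a b :=
    fun h => h.mono le_sup_left
  have he : (G ⊔ fromEdgeSet {s(u, u')}).Reachable u u' :=
    Adj.reachable (by simp [hne])
  have hu : ∀ x ∈ cls G u ∪ cls G u', (G ⊔ fromEdgeSet {s(u, u')}).Reachable u x :=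
    fun x hx => hx.elim hle fun h => he.trans (hle h)
  ext w
  refine ⟨fun h => ?_, fun h => (hu v hv).symm.trans (hu w h)⟩
  rcases reachable_of_sup_edge h with h | h
  · exact hv.imp (Reachable.trans · h) (Reachable.trans · h)
  · exact h.2

lemma cls_sup_edge_of_not_mem (hv : v ∉ cls G u ∪ cls G u') :
    cls (G ⊔ fromEdgeSet {s(u, u')}) v = cls G v := by
  ext w
  refine ⟨fun h => ?_, fun h => Reachable.mono le_sup_left h⟩
  exact (reachable_of_sup_edge h).resolve_right fun h => hv h.1

/-- The components that do not meet the new edge. -/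
def restCls (G : SimpleGraph ℕ) (u u' : ℕ) : Set (Set ℕ) :=
  cls G '' {v | v ∉ cls G u ∪ cls G u'}

lemma cls_notMem_restCls : cls G u ∉ restCls G u u' := by
  rintro ⟨v, hv, h⟩
  exact hv (.inl (mem_cls_iff.2 h))

lemma cls_notMem_restCls' : cls G u' ∉ restCls G u u' := by
  rintro ⟨v, hv, h⟩
  exact hv (.inr (mem_cls_iff.2 h))

lemma union_notMem_restCls : cls G u ∪ cls G u' ∉ restCls G u u' := by
  rintro ⟨v, hv, h⟩
  exact hv (h ▸ mem_cls_self)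

lemma range_cls : Set.range (cls G) = insert (cls G u) (insert (cls G u') (restCls G u u')) := by
  ext S
  constructor
  · rintro ⟨v, rfl⟩
    by_cases hv : v ∈ cls G u ∪ cls G u'
    · exact hv.elim (fun h => .inl (cls_eq_of_mem h)) fun h => .inr (.inl (cls_eq_of_mem h))
    · exact .inr (.inr ⟨v, hv, rfl⟩)
  · rintro (rfl | rfl | ⟨v, -, rfl⟩) <;> exact ⟨_, rfl⟩

lemma range_cls_sup_edge (hne : u ≠ u') :
    Set.range (cls (G ⊔ fromEdgeSet {s(u, u')})) =
      insert (cls G u ∪ cls G u') (restCls G u u') := by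
  ext S
  constructor
  · rintro ⟨v, rfl⟩
    by_cases hv : v ∈ cls G u ∪ cls G u'
    · exact .inl (cls_sup_edge_of_mem hne hv)
    · exact .inr ⟨v, hv, (cls_sup_edge_of_not_mem hv).symm⟩
  · rintro (rfl | ⟨v, hv, rfl⟩)
    · exact ⟨u, cls_sup_edge_of_mem hne (.inl mem_cls_self)⟩
    · exact ⟨v, cls_sup_edge_of_not_mem hv⟩

lemma finite_restCls_inter_support (hfin : G.edgeSet.Finite) :
    (restCls G u u' ∩ Function.support (fSet G σ)).Finite :=
  (finite_range_cls_inter_support hfin).subset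
    (Set.inter_subset_inter_left _ (Set.image_subset_range _ _))

lemma fSet_sup_edge_of_mem_restCls (hne : u ≠ u') {σ' : ℕ → Bool}
    (hσ' : ∀ v ∉ cls G u', σ' v = σ v) {S : Set ℕ} (hS : S ∈ restCls G u u') :
    fSet (G ⊔ fromEdgeSet {s(u, u')}) σ' S = fSet G σ S := by
  obtain ⟨v, hv, rfl⟩ := hS
  have hside : ∀ t, side σ' (cls G v) t = side σ (cls G v) t := fun t =>
    Set.sep_ext_iff.2 fun w hw => by
      rw [hσ' w fun hw' => hv (.inr (hw'.trans (Reachable.symm hw)))]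
  have hu : u ∉ cls G v := fun h => hv (.inl (Reachable.symm h))
  have hpot : ∀ t, pot (G ⊔ fromEdgeSet {s(u, u')}) (side σ (cls G v) t) =
      pot G (side σ (cls G v) t) := fun t =>
    pot_sup_edge_of_not_mem hne fun h => hu h.1.1
  simp only [fSet, hside, hpot]

lemma potential_sup_edge (hfin : G.edgeSet.Finite) (hne : u ≠ u') {σ' : ℕ → Bool}
    (hσ' : ∀ v ∉ cls G u', σ' v = σ v) :
    potential (G ⊔ fromEdgeSet {s(u, u')}) σ' =
      fSet (G ⊔ fromEdgeSet {s(u, u')}) σ' (cls G u ∪ cls G u') +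
        ∑ᶠ S ∈ restCls G u u', fSet G σ S := by
  have hfin' : (G ⊔ fromEdgeSet {s(u, u')}).edgeSet.Finite := by
    rw [edgeSet_sup_edge hne]
    exact hfin.insert _
  rw [potential_eq_finsum_cls, range_cls_sup_edge hne,
    finsum_mem_insert' _ union_notMem_restCls, finsum_mem_congr rfl
      fun S hS => fSet_sup_edge_of_mem_restCls hne hσ' hS]
  refine (finite_range_cls_inter_support hfin').subset (Set.inter_subset_inter_left _ ?_)
  rw [range_cls_sup_edge hne]
  exact Set.subset_insert _ _

lemma potential_of_mem (hfin : G.edgeSet.Finite) (h : u' ∈ cls G u) :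
    potential G σ = fSet G σ (cls G u) + ∑ᶠ S ∈ restCls G u u', fSet G σ S := by
  rw [potential_eq_finsum_cls, range_cls (u := u) (u' := u'), cls_eq_of_mem h,
    Set.insert_eq_of_mem (Set.mem_insert _ _), finsum_mem_insert' _ cls_notMem_restCls
      (finite_restCls_inter_support hfin)]

lemma potential_of_not_mem (hfin : G.edgeSet.Finite) (h : u' ∉ cls G u) :
    potential G σ =
      fSet G σ (cls G u) + fSet G σ (cls G u') + ∑ᶠ S ∈ restCls G u u', fSet G σ S := by
  have hu : cls G u ∉ insert (cls G u') (restCls G u u') := by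
    rintro (h' | h')
    · exact h (mem_cls_iff.2 h'.symm)
    · exact cls_notMem_restCls h'
  have hf := finite_restCls_inter_support (σ := σ) (u := u) (u' := u') hfin
  rw [potential_eq_finsum_cls, range_cls (u := u) (u' := u'), finsum_mem_insert' _ hu,
    finsum_mem_insert' _ cls_notMem_restCls' hf, add_assoc]
  refine (hf.insert (cls G u')).subset ?_
  rintro S ⟨rfl | hS, hS'⟩
  · exact .inl rfl
  · exact .inr ⟨hS, hS'⟩

open Classical in
/-- The red-bipartition obtained from `σ` by swapping the sides on `S` when `k` is `true`. -/
noncomputable def flipOn (S : Set ℕ) (k : Bool) (σ : ℕ → Bool) (v : ℕ) : Bool :=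
  if v ∈ S then xor k (σ v) else σ v

lemma flipOn_of_mem {S : Set ℕ} {k : Bool} (h : v ∈ S) : flipOn S k σ v = xor k (σ v) := if_pos h

lemma flipOn_of_not_mem {S : Set ℕ} {k : Bool} (h : v ∉ S) : flipOn S k σ v = σ v := if_neg h

lemma isRedBipartition_sup_edge {c : Sym2 ℕ → Bool} (hσ : IsRedBipartition G c σ)
    (hnadj : ¬ G.Adj u u') (k : Bool) :
    IsRedBipartition (G ⊔ fromEdgeSet {s(u, u')})
      (fun x => if x = s(u, u') then
        xor (flipOn (cls G u') k σ u) (flipOn (cls G u') k σ u') else c x)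
      (flipOn (cls G u') k σ) := by
  intro a b hab
  by_cases he : s(a, b) = s(u, u')
  · simp only [he, if_true]
    rcases Sym2.eq_iff.1 he with ⟨rfl, rfl⟩ | ⟨rfl, rfl⟩
    · simp
    · simpa using ne_comm
  · have hadj : G.Adj a b := by
      rw [sup_adj, fromEdgeSet_adj, Set.mem_singleton_iff] at hab
      exact hab.resolve_right fun h => he h.1
    simp only [he, if_false]
    rw [hσ a b hadj]
    by_cases ha : a ∈ cls G u'
    · rw [flipOn_of_mem ha, flipOn_of_mem ((mem_cls_iff_of_adj hadj u').1 ha)]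
      simp
    · rw [flipOn_of_not_mem ha, flipOn_of_not_mem ((mem_cls_iff_of_adj hadj u').not.1 ha)]

lemma pot_side_flipOn (hfin : G.edgeSet.Finite) (hd : u' ∉ cls G u) (k t : Bool) :
    pot G (side (flipOn (cls G u') k σ) (cls G u ∪ cls G u') t) =
      pot G (side σ (cls G u) t) + pot G (side σ (cls G u') (xor k t)) := by
  rw [← pot_union hfin (side_subset _ _) (side_subset _ _) hd]
  congr 1
  ext v
  have hdisj : v ∈ cls G u → v ∉ cls G u' := fun h h' => hd (h.trans (Reachable.symm h'))
  by_cases h : v ∈ cls G u'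
  · have h' : v ∉ cls G u := fun h' => hdisj h' h
    simp only [side, Set.mem_ofPred_eq, Set.mem_union, flipOn_of_mem h, h, h']
    cases k <;> cases t <;> simp
  · simp [side, flipOn_of_not_mem h, h]

lemma pot_empty : pot G ∅ = 0 := by
  have : {e ∈ G.edgeSet | ∀ v ∈ e, v ∈ (∅ : Set ℕ)} = ∅ := by
    refine Set.eq_empty_of_forall_notMem fun e => ?_
    induction e with
    | h a b => exact fun h => h.2 a (Sym2.mem_mk_left a b)
  rw [pot, this]
  simp

lemma pot_singleton : pot G {v} = φ := by
  have : {e ∈ G.edgeSet | ∀ w ∈ e, w ∈ ({v} : Set ℕ)} = ∅ := by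
    refine Set.eq_empty_of_forall_notMem fun e => ?_
    induction e with
    | h a b =>
      rintro ⟨hadj, h⟩
      exact G.ne_of_adj hadj
        ((h a (Sym2.mem_mk_left a b)).trans (h b (Sym2.mem_mk_right a b)).symm)
  rw [pot, this]
  simp

/-- An isolated vertex has value `0`, and its sides have potentials `φ` and `0`. -/
lemma fSet_cls_cases (G : SimpleGraph ℕ) (σ : ℕ → Bool) (v : ℕ) :
    (fSet G σ (cls G v) = 0 ∧ pot G (side σ (cls G v) (σ v)) = φ ∧
      pot G (side σ (cls G v) !σ v) = 0) ∨
    fSet G σ (cls G v) =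
      g (pot G (side σ (cls G v) (σ v))) (pot G (side σ (cls G v) !σ v)) := by
  by_cases h : (cls G v).Subsingleton
  · left
    have hv : cls G v = {v} := h.eq_singleton_of_mem mem_cls_self
    have h₁ : side σ {v} (σ v) = {v} := by
      ext w
      simp +contextual [side]
    have h₂ : side σ {v} (!σ v) = ∅ := by
      ext w
      simp +contextual [side]
    rw [fSet_of_subsingleton h, hv, h₁, h₂]
    exact ⟨rfl, pot_singleton, pot_empty⟩
  · exact .inr (fSet_of_not_subsingleton h _)

lemma fSet_merge (hfin : G.edgeSet.Finite) (hne : u ≠ u') (hnadj : ¬ G.Adj u u')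
    (hd : u' ∉ cls G u) :
    ∃ k, fSet (G ⊔ fromEdgeSet {s(u, u')}) (flipOn (cls G u') k σ) (cls G u ∪ cls G u') ≤
      fSet G σ (cls G u) + fSet G σ (cls G u') + φ + 1 := by
  have hns : ¬ (cls G u ∪ cls G u').Subsingleton := fun h =>
    hne (h (.inl mem_cls_self) (.inr mem_cls_self))
  have hu : u ∉ cls G u' := fun h => hd (Reachable.symm h)
  have hmem : ∀ k, u ∈ side (flipOn (cls G u') k σ) (cls G u ∪ cls G u') (σ u) := fun k =>
    ⟨.inl mem_cls_self, flipOn_of_not_mem hu⟩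
  have hmem' : ∀ k t, u' ∈ side (flipOn (cls G u') k σ) (cls G u ∪ cls G u') t ↔
      xor k (σ u') = t := fun k t => by
    rw [← flipOn_of_mem (mem_cls_self (G := G))]
    exact and_iff_right (.inr mem_cls_self)
  have hnot : ∀ k, u ∉ side (flipOn (cls G u') k σ) (cls G u ∪ cls G u') (!σ u) := fun k h =>
    by simpa [flipOn_of_not_mem hu] using h.2
  have hred : fSet (G ⊔ fromEdgeSet {s(u, u')}) (flipOn (cls G u') (xor (σ u') !σ u) σ)
      (cls G u ∪ cls G u') =
      g (pot G (side σ (cls G u) (σ u)) + pot G (side σ (cls G u') !σ u'))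
        (pot G (side σ (cls G u) !σ u) + pot G (side σ (cls G u') (σ u'))) := by
    rw [fSet_of_not_subsingleton hns (σ u), pot_sup_edge_of_not_mem hne fun h => ?_,
      pot_sup_edge_of_not_mem hne fun h => hnot _ h.1, pot_side_flipOn hfin hd,
      pot_side_flipOn hfin hd]
    · cases σ u <;> cases σ u' <;> rfl
    · have := (hmem' _ _).1 h.2
      revert this
      cases σ u <;> cases σ u' <;> decide
  have hblue : fSet (G ⊔ fromEdgeSet {s(u, u')}) (flipOn (cls G u') (xor (σ u') (σ u)) σ)
      (cls G u ∪ cls G u') =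
      g (pot G (side σ (cls G u) (σ u)) + pot G (side σ (cls G u') (σ u')) + 1)
        (pot G (side σ (cls G u) !σ u) + pot G (side σ (cls G u') !σ u')) := by
    rw [fSet_of_not_subsingleton hns (σ u),
      pot_sup_edge_of_mem hfin hne hnadj (hmem _) ((hmem' _ _).2 ?_),
      pot_sup_edge_of_not_mem hne fun h => hnot _ h.1, pot_side_flipOn hfin hd,
      pot_side_flipOn hfin hd]
    · cases σ u <;> cases σ u' <;> rfl
    · cases σ u <;> cases σ u' <;> rfl
  suffices h : _ ∨ _ from h.elim (fun h => ⟨_, hred.trans_le h⟩) fun h => ⟨_, hblue.trans_le h⟩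
  rcases fSet_cls_cases G σ u with ⟨h₁, hx₁, hy₁⟩ | h₁ <;>
    rcases fSet_cls_cases G σ u' with ⟨h₂, hx₂, hy₂⟩ | h₂
  · left
    rw [h₁, h₂, hx₁, hy₁, hx₂, hy₂]
    simp [g_phi_phi]
  · have := g_attach_vertex (pot G (side σ (cls G u') (σ u'))) (pot G (side σ (cls G u') !σ u'))
    rw [h₁, h₂, hx₁, hy₁, g_comm (φ + _)]
    simpa only [zero_add, add_comm φ] using this
  · have := g_attach_vertex (pot G (side σ (cls G u) (σ u))) (pot G (side σ (cls G u) !σ u))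
    rw [h₁, h₂, hx₂, hy₂]
    simpa only [add_zero] using this
  · rw [h₁, h₂]
    exact g_merge _ _ _ _

lemma fSet_sup_edge_le_of_mem (hfin : G.edgeSet.Finite) (hne : u ≠ u') (hnadj : ¬ G.Adj u u')
    (h : u' ∈ cls G u) :
    fSet (G ⊔ fromEdgeSet {s(u, u')}) σ (cls G u) ≤ fSet G σ (cls G u) + φ + 1 := by
  have hns : ¬ (cls G u).Subsingleton := fun hs => hne (hs mem_cls_self h)
  rw [fSet_of_not_subsingleton hns (σ u), fSet_of_not_subsingleton hns (σ u),
    pot_sup_edge_of_not_mem (W := side σ _ !σ u) hne fun hu => by simpa using hu.1.2]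
  by_cases hu' : σ u' = σ u
  · rw [pot_sup_edge_of_mem (W := side σ _ (σ u)) hfin hne hnadj ⟨mem_cls_self, rfl⟩
      ⟨h, hu'⟩]
    exact g_add_one_le _ _
  · rw [pot_sup_edge_of_not_mem hne fun hu => hu' hu.2.2]
    linarith [phi_gt]

end

/-- Let `G` be a red-bipartite coloured graph on `ℕ` with finitely
many edges and let `e = uu'` be a non-edge of `G` with `u ≠ u'`. Then `e` can be
coloured red or blue so that the resulting coloured graph `G'` is red-bipartite and
`f(G') ≤ f(G) + φ + 1`. -/
theorem potential_step (G : SimpleGraph ℕ) (hfin : G.edgeSet.Finite)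
    (c : Sym2 ℕ → Bool) (u u' : ℕ) (hne : u ≠ u') (hnadj : ¬ G.Adj u u')
    (σ : ℕ → Bool) (hσ : IsRedBipartition G c σ) :
    ∃ (b : Bool) (σ' : ℕ → Bool),
      IsRedBipartition (G ⊔ fromEdgeSet {s(u, u')})
        (fun x => if x = s(u, u') then b else c x) σ' ∧
      potential (G ⊔ fromEdgeSet {s(u, u')}) σ' ≤ potential G σ + φ + 1 := by
  suffices h : ∃ k, potential (G ⊔ fromEdgeSet {s(u, u')}) (flipOn (cls G u') k σ) ≤
      potential G σ + φ + 1 from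
    h.elim fun k hk => ⟨_, _, isRedBipartition_sup_edge hσ hnadj k, hk⟩
  have hflip : ∀ k, ∀ v ∉ cls G u', flipOn (cls G u') k σ v = σ v := fun _ _ =>
    flipOn_of_not_mem
  by_cases hd : u' ∈ cls G u
  · refine ⟨false, ?_⟩
    have hσ' : flipOn (cls G u') false σ = σ := by
      funext v
      simp [flipOn]
    rw [potential_sup_edge hfin hne (hflip false), hσ', potential_of_mem hfin hd,
      cls_eq_of_mem hd, Set.union_self]
    linarith [fSet_sup_edge_le_of_mem (σ := σ) hfin hne hnadj hd]
  · obtain ⟨k, hk⟩ := fSet_merge (σ := σ) hfin hne hnadj hd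
    refine ⟨k, ?_⟩
    rw [potential_sup_edge hfin hne (hflip k), potential_of_not_mem hfin hd]
    linarith
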